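/- For W = x_1⁴ + x_2⁴ − y_1⁵ − y_1y_2⁵ − y_2y_3⁶ (a Delsarte polynomial in 5 variables with weights (25,25,20,16,14) and degree 100), the quotient S̃L(W) = SL(W)/J_W has order 2 and is generated by the class of the involution ν = diag(i, −i, 1, 1, 1); here SL(W) is the group of diagonal matrices diag(a_1,a_2,b_1,b_2,b_3) with a_1⁴ = a_2⁴ = b_1⁵ = 1, b_1b_2⁵ = 1, b_2b_3⁶ = 1 and a_1a_2b_1b_2b_3 = 1. -/

import Mathlib

open Complex BigOperators Matrix

noncomputable section

namespace BV

/-- The Delsarte polynomial function attached to an exponent matrix `A`. -/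
def wfun {ι : Type*} [Fintype ι] (A : Matrix ι ι ℕ) (x : ι → ℂ) : ℂ :=
  ∑ i, ∏ j, x j ^ A i j

/-- The group `Aut(P)` of diagonal symmetries of a function `P : (ι → ℂ) → ℂ`. -/
def autP {ι : Type*} (P : (ι → ℂ) → ℂ) : Subgroup (ι → ℂˣ) where
  carrier := {lam | ∀ x : ι → ℂ, P (fun j => (lam j : ℂ) * x j) = P x}
  one_mem' := by intro x; simp
  mul_mem' := by
    intro a b ha hb x
    have h1 := ha fun j => (b j : ℂ) * x j
    have h2 := hb x
    have h3 : (fun j => ((a * b) j : ℂ) * x j) = fun j => (a j : ℂ) * ((b j : ℂ) * x j) := by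
      funext j; simp [mul_assoc]
    rw [h3, h1, h2]
  inv_mem' := by
    intro a ha x
    have h := (ha fun j => (((a j)⁻¹ : ℂˣ) : ℂ) * x j).symm
    have h2 : (fun j => (a j : ℂ) * ((((a j)⁻¹ : ℂˣ) : ℂ) * x j)) = x := by
      funext j; exact Units.mul_inv_cancel_left (a j) (x j)
    rw [h2] at h
    simpa using h

/-- The product-of-entries homomorphism (the determinant of a diagonal matrix). -/
def prodHom (ι : Type*) [Fintype ι] : (ι → ℂˣ) →* ℂˣ where
  toFun lam := ∏ j, lam j
  map_one' := by simp
  map_mul' a b := by simp [Finset.prod_mul_distrib]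

/-- The group `SL(P)` of diagonal symmetries of determinant one. -/
def slP {ι : Type*} [Fintype ι] (P : (ι → ℂ) → ℂ) : Subgroup (ι → ℂˣ) :=
  autP P ⊓ (prodHom ι).ker

/-- `exp(2 π i v)` as a unit of `ℂ`. -/
def eU (v : ℚ) : ℂˣ := Units.mk0 (Complex.exp (2 * (Real.pi : ℂ) * Complex.I * (v : ℂ)))
  (Complex.exp_ne_zero _)

/-- The element `j_W` attached to a charge vector `q`. -/
def jW {ι : Type*} (q : ι → ℚ) : ι → ℂˣ := fun j => eU (q j)

/-- The group `J_W = ⟨j_W⟩`. -/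
def JW {ι : Type*} (q : ι → ℚ) : Subgroup (ι → ℂˣ) := Subgroup.zpowers (jW q)

end BV

/-- `W = x₁⁴ + x₂⁴ − y₁⁵ − y₁y₂⁵ − y₂y₃⁶` as a function. -/
def P17 : (Fin 5 → ℂ) → ℂ :=
  fun z => z 0 ^ 4 + z 1 ^ 4 - z 2 ^ 5 - z 2 * z 3 ^ 5 - z 3 * z 4 ^ 6

/-- The charges `q = (25/100, 25/100, 20/100, 16/100, 14/100)` of `W`, from the weights
`(25,25,20,16,14)` and the degree `100`. -/
def q17 : Fin 5 → ℚ := ![25/100, 25/100, 20/100, 16/100, 14/100]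

/-- `i` as a unit of `ℂ`. -/
def iu : ℂˣ := Units.mk0 Complex.I Complex.I_ne_zero

/-- The involution `ν = diag(i, −i, 1, 1, 1)`. -/
def nu17 : Fin 5 → ℂˣ := ![iu, -iu, 1, 1, 1]

lemma mem_slP17 (lam : Fin 5 → ℂˣ) :
      lam ∈ BV.slP P17 ↔
        (lam 0 ^ 4 = 1 ∧ lam 1 ^ 4 = 1 ∧ lam 2 ^ 5 = 1 ∧ lam 2 * lam 3 ^ 5 = 1 ∧
          lam 3 * lam 4 ^ 6 = 1 ∧ lam 0 * lam 1 * lam 2 * lam 3 * lam 4 = 1) := by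
  have hdet : lam ∈ (BV.prodHom (Fin 5)).ker ↔
      lam 0 * lam 1 * lam 2 * lam 3 * lam 4 = 1 := by
    rw [MonoidHom.mem_ker]
    simp [BV.prodHom, Fin.prod_univ_five]
  have haut : lam ∈ BV.autP P17 ↔
      ∀ x : Fin 5 → ℂ, P17 (fun j => (lam j : ℂ) * x j) = P17 x := Iff.rfl
  rw [BV.slP, Subgroup.mem_inf, hdet, haut]
  constructor
  · rintro ⟨h, hd⟩
    have h0 := h ![1, 0, 0, 0, 0]
    have h1 := h ![0, 1, 0, 0, 0]
    have h2 := h ![0, 0, 1, 0, 0]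
    have h3 := h ![0, 0, 1, 1, 0]
    have h4 := h ![0, 0, 0, 1, 1]
    simp [P17] at h0 h1 h2 h3 h4
    refine ⟨?_, ?_, ?_, ?_, ?_, hd⟩
    · ext; simpa using h0
    · ext; simpa using h1
    · ext; simpa using h2
    · ext; push_cast; linear_combination -h3 - h2
    · ext; push_cast; linear_combination h4
  · rintro ⟨h0, h1, h2, h3, h4, hd⟩
    refine ⟨fun x => ?_, hd⟩
    simp only [Units.ext_iff] at h0 h1 h2 h3 h4
    push_cast at h0 h1 h2 h3 h4
    simp only [P17]
    linear_combination x 0 ^ 4 * h0 + x 1 ^ 4 * h1 - x 2 ^ 5 * h2 - x 2 * x 3 ^ 5 * h3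
      - x 3 * x 4 ^ 6 * h4

lemma eU_add (v w : ℚ) : BV.eU (v + w) = BV.eU v * BV.eU w := by
  ext
  simp [BV.eU, ← Complex.exp_add, mul_add]

lemma eU_pow (v : ℚ) (n : ℕ) : BV.eU v ^ n = BV.eU (n * v) := by
  ext
  simp only [BV.eU, Units.val_pow_eq_pow_val, Units.val_mk0, ← Complex.exp_nat_mul]
  congr 1
  push_cast
  ring

lemma eU_int (n : ℤ) : BV.eU n = 1 := by
  ext
  simp only [BV.eU, Units.val_mk0, Units.val_one]
  rw [Complex.exp_eq_one_iff]
  exact ⟨n, by push_cast; ring⟩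

lemma eU_prim (i n : ℕ) (h0 : n ≠ 0) (hi : i.Coprime n) :
    IsPrimitiveRoot (BV.eU ((i : ℚ) / n)) n := by
  rw [← IsPrimitiveRoot.coe_units_iff]
  have := Complex.isPrimitiveRoot_exp_of_coprime i n h0 hi
  convert this using 1
  simp [BV.eU]

lemma j_mem : BV.jW q17 ∈ BV.slP P17 := by
  rw [mem_slP17]
  simp only [BV.jW, eU_pow, ← eU_add]
  refine ⟨?_, ?_, ?_, ?_, ?_, ?_⟩ <;>
    (convert eU_int 1 using 2; simp [q17]; try norm_num)

lemma j_prim0 : IsPrimitiveRoot (BV.jW q17 0) 4 := by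
  convert eU_prim 1 4 (by norm_num) (by norm_num) using 1
  simp only [BV.jW]; congr 1; simp [q17]; norm_num

lemma j_prim4 : IsPrimitiveRoot (BV.jW q17 4) 50 := by
  convert eU_prim 7 50 (by norm_num) (by norm_num) using 1
  simp only [BV.jW]; congr 1; simp [q17]; norm_num

lemma units_root {z w : ℂˣ} {n : ℕ} [NeZero n] (hz : IsPrimitiveRoot z n) (hw : w ^ n = 1) :
    ∃ a : ℕ, z ^ a = w := by
  have hz' := IsPrimitiveRoot.coe_units_iff.2 hz
  have hw' : (w : ℂ) ^ n = 1 := by rw [← Units.val_pow_eq_pow_val, hw, Units.val_one]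
  obtain ⟨a, -, ha⟩ := hz'.eq_pow_of_pow_eq_one hw'
  exact ⟨a, by ext; simpa using ha⟩

lemma j_01 : BV.jW q17 1 = BV.jW q17 0 := by
  simp [BV.jW, q17]

/-- The coordinates of an element of `SL(W)` in terms of the last coordinate. -/
lemma sl_coords {lam : Fin 5 → ℂˣ} (h : lam ∈ BV.slP P17) :
    lam 3 = (lam 4 ^ 6)⁻¹ ∧ lam 2 = lam 4 ^ 30 ∧ lam 0 * lam 1 * lam 4 ^ 25 = 1 ∧
      lam 4 ^ 50 = 1 := by
  rw [mem_slP17] at h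
  obtain ⟨h0, h1, h2, h3, h4, hd⟩ := h
  have e3 : lam 3 = (lam 4 ^ 6)⁻¹ := eq_inv_of_mul_eq_one_left h4
  have e2 : lam 2 = lam 4 ^ 30 := by
    rw [eq_inv_of_mul_eq_one_left h3, e3, inv_pow, inv_inv, ← pow_mul]
  have e : lam 0 * lam 1 * lam 4 ^ 25 = 1 := by
    rw [← hd, e2, e3]
    have : lam 4 ^ 25 = lam 4 ^ 30 * (lam 4 ^ 6)⁻¹ * lam 4 := by
      rw [eq_comm, mul_assoc, mul_comm, mul_assoc, mul_comm, ← eq_mul_inv_iff_mul_eq]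
      group
    rw [this]; simp only [mul_assoc]
  refine ⟨e3, e2, e, ?_⟩
  have a1 : lam 4 ^ 150 = 1 := by
    rw [← h2, e2, ← pow_mul]
  have a2 : lam 4 ^ 100 = 1 := by
    have : (lam 0 * lam 1 * lam 4 ^ 25) ^ 4 = 1 := by rw [e, one_pow]
    rw [mul_pow, mul_pow, h0, h1, one_mul, one_mul, ← pow_mul] at this
    exact this
  have : lam 4 ^ 150 = lam 4 ^ 100 * lam 4 ^ 50 := by rw [← pow_add]
  rw [a1, a2, one_mul] at this
  exact this.symm

lemma mem_JW_iff {lam : Fin 5 → ℂˣ} (h : lam ∈ BV.slP P17) :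
    lam ∈ BV.JW q17 ↔ lam 0 = lam 1 := by
  constructor
  · rintro ⟨k, rfl⟩
    simp [j_01]
  · intro h01
    obtain ⟨e3, e2, e, e4⟩ := sl_coords h
    obtain ⟨f3, f2, f, f4⟩ := sl_coords j_mem
    have h0 := ((mem_slP17 lam).1 h).1
    set z := BV.jW q17 with hz
    obtain ⟨a, ha⟩ := units_root j_prim0 h0
    obtain ⟨b, hb⟩ := units_root j_prim4 e4
    rw [← hz] at ha hb
    have hz01 : z 1 = z 0 := j_01
    rw [hz01] at f
    rw [← h01, ← ha, ← hb] at e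
    have key : z 4 ^ ((25 * ((b : ℤ) - a) : ℤ)) = 1 := by
      have f' : (z 0 * z 0 * z 4 ^ 25) ^ a = 1 := by rw [f, one_pow]
      rw [mul_pow, mul_pow] at f'
      have : (z 4 ^ b) ^ 25 = (z 4 ^ 25) ^ a := mul_left_cancel (e.trans f'.symm)
      rw [mul_sub, _root_.zpow_sub, mul_inv_eq_one]
      rw [← pow_mul, ← pow_mul, mul_comm b] at this
      exact_mod_cast this
    rw [j_prim4.zpow_eq_one_iff_dvd] at key
    obtain ⟨t, ht⟩ : ∃ t : ℤ, (b : ℤ) - a = 2 * t := ⟨((b : ℤ) - a) / 2, by omega⟩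
    have hp4 : z 4 ^ ((25 * a - 24 * b : ℤ)) = lam 4 := by
      have : (25 * a - 24 * b : ℤ) = b + (50 : ℕ) * (-t) := by push_cast; omega
      rw [this, _root_.zpow_add, _root_.zpow_mul, _root_.zpow_natCast, _root_.zpow_natCast, f4, _root_.one_zpow, mul_one, hb]
    have hp0 : z 0 ^ ((25 * a - 24 * b : ℤ)) = lam 0 := by
      have : (25 * a - 24 * b : ℤ) = a + (4 : ℕ) * (6 * a - 6 * b) := by push_cast; ring
      rw [this, _root_.zpow_add, _root_.zpow_mul, _root_.zpow_natCast, _root_.zpow_natCast, j_prim0.pow_eq_one, _root_.one_zpow,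
        mul_one, ha]
    refine ⟨25 * a - 24 * b, ?_⟩
    have hk : z ^ ((25 * a - 24 * b : ℤ)) ∈ BV.slP P17 := Subgroup.zpow_mem _ j_mem _
    obtain ⟨g3, g2, -, -⟩ := sl_coords hk
    simp only [Pi.pow_apply] at g3 g2
    rw [hp4, ← e3] at g3
    rw [hp4, ← e2] at g2
    funext i
    fin_cases i
    · exact hp0
    · change z 1 ^ ((25 * a - 24 * b : ℤ)) = lam 1
      rw [hz01, hp0, h01]
    · exact g2
    · exact g3
    · exact hp4

lemma nu_mem : nu17 ∈ BV.slP P17 := by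
  rw [mem_slP17]
  have h : (-I) ^ 4 = 1 := by rw [Even.neg_pow (by decide), I_pow_four]
  simp [nu17, Units.ext_iff, iu, h]

lemma sl_signs {lam : Fin 5 → ℂˣ} (h : lam ∈ BV.slP P17) :
    lam 0 = lam 1 ∨ lam 0 = - lam 1 := by
  obtain ⟨-, -, e, e4⟩ := sl_coords h
  have h0 := ((mem_slP17 lam).1 h).1
  have h1 := ((mem_slP17 lam).1 h).2.1
  have h2 : (lam 0 * lam 1) ^ 2 = 1 := by
    have : (lam 0 * lam 1 * lam 4 ^ 25) ^ 2 = 1 := by rw [e, one_pow]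
    rw [mul_pow, ← pow_mul] at this
    rw [e4, mul_one] at this
    exact this
  have h3 : (lam 0 : ℂ) ^ 2 = lam 1 ^ 2 := by
    simp only [Units.ext_iff] at h1 h2
    push_cast at h1 h2
    linear_combination (-(lam 0 : ℂ) ^ 2) * h1 + (lam 1 : ℂ) ^ 2 * h2
  rcases sq_eq_sq_iff_eq_or_eq_neg.1 h3 with h | h
  · left; ext; exact h
  · right; ext; simpa using h

lemma mul_nu_mem_iff {lam : Fin 5 → ℂˣ} (h : lam ∈ BV.slP P17) :
    lam * nu17 ∈ BV.JW q17 ↔ lam 0 = - lam 1 := by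
  rw [mem_JW_iff (Subgroup.mul_mem _ h nu_mem)]
  simp only [Pi.mul_apply, nu17]
  simp [Units.ext_iff, iu, ← neg_mul]

lemma units_ne_neg (u : ℂˣ) : u ≠ -u := by
  intro h
  have : (u : ℂ) = -u := by simpa using congrArg Units.val h
  exact u.ne_zero (self_eq_neg.1 this)

/-- for `W = x₁⁴ + x₂⁴ − y₁⁵ − y₁y₂⁵ − y₂y₃⁶` (weights `(25,25,20,16,14)`,
degree `100`), `SL(W)` is the group of diagonal matrices `diag(a₁,a₂,b₁,b₂,b₃)` with
`a₁⁴ = a₂⁴ = b₁⁵ = 1`, `b₁b₂⁵ = 1`, `b₂b₃⁶ = 1`, `a₁a₂b₁b₂b₃ = 1`, and the quotient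
`S̃L(W) = SL(W)/J_W` has order `2`, generated by the class of `ν = diag(i,−i,1,1,1)`. -/
theorem example_BV_transposed :
    (∀ lam : Fin 5 → ℂˣ,
      lam ∈ BV.slP P17 ↔
        (lam 0 ^ 4 = 1 ∧ lam 1 ^ 4 = 1 ∧ lam 2 ^ 5 = 1 ∧ lam 2 * lam 3 ^ 5 = 1 ∧
          lam 3 * lam 4 ^ 6 = 1 ∧ lam 0 * lam 1 * lam 2 * lam 3 * lam 4 = 1))
    ∧ Nat.card (BV.slP P17 ⧸ (BV.JW q17).subgroupOf (BV.slP P17)) = 2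
    ∧ ∃ h : nu17 ∈ BV.slP P17,
        ∀ x : BV.slP P17 ⧸ (BV.JW q17).subgroupOf (BV.slP P17),
          ∃ k : ℤ, x = (QuotientGroup.mk (⟨nu17, h⟩ : BV.slP P17)) ^ k := by
  refine ⟨mem_slP17, ?_, nu_mem, ?_⟩
  · change ((BV.JW q17).subgroupOf (BV.slP P17)).index = 2
    rw [Subgroup.index_eq_two_iff]
    refine ⟨⟨nu17, nu_mem⟩, ?_⟩
    rintro ⟨b, hb⟩
    simp only [Subgroup.mem_subgroupOf, Subgroup.coe_mul]
    rw [mul_nu_mem_iff hb, mem_JW_iff hb]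
    rcases sl_signs hb with h | h
    · exact Or.inr ⟨h, fun h' => units_ne_neg _ (h.symm.trans h')⟩
    · exact Or.inl ⟨h, fun h' => units_ne_neg _ (h'.symm.trans h)⟩
  · intro x
    obtain ⟨⟨b, hb⟩, rfl⟩ := QuotientGroup.mk_surjective x
    rcases sl_signs hb with h | h
    · refine ⟨0, ?_⟩
      rw [zpow_zero, QuotientGroup.eq_one_iff, Subgroup.mem_subgroupOf]
      exact (mem_JW_iff hb).2 h
    · refine ⟨-1, ?_⟩
      rw [_root_.zpow_neg_one, eq_inv_iff_mul_eq_one, ← QuotientGroup.mk_mul,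
        QuotientGroup.eq_one_iff, Subgroup.mem_subgroupOf]
      exact (mul_nu_mem_iff hb).2 h
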